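/- For every integer r ≥ 0 there exists a system of (r-1)r/2 + 2 anonymous processes such that, for any binary consensus algorithm using atomic read-write registers and satisfying nondeterministic solo termination, a configuration C_r is reachable by an execution E_r with the following properties: (1) there is a set R of r registers each of which has been written to during E_r, and (2) C_r is bivalent, i.e., some solo execution of some process from C_r returns 0 and some solo execution of some process from C_r returns 1. -/

import Mathlib

/-!  A model of asynchronous shared memory with atomic read-write registers and
anonymous processes: all processes run the same (possibly nondeterministic /
randomized) code, given by an `Algo`. -/

/-- A shared-memory operation: read value `v` from register `r`, or write `v` to `r`. -/
inductive Op (Reg Val : Type) where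
  | read  (r : Reg) (v : Val)
  | write (r : Reg) (v : Val)

/-- The register accessed by an operation. -/
def Op.target {Reg Val : Type} : Op Reg Val → Reg
  | .read r _ => r
  | .write r _ => r

/-- An anonymous algorithm: the initial state determined by the binary input,
the initial register contents, the (possibly nondeterministic) transition
relation between local states, and the output (decision, if already returned). -/
structure Algo (Reg Val State : Type) where
  init : Bool → State
  initReg : Reg → Val
  step : State → Op Reg Val → State → Prop
  output : State → Option Bool

/-- A configuration: the state of every process and the contents of every register. -/
structure Config (Proc Reg Val State : Type) where
  pstate : Proc → State
  regs : Reg → Val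

variable {Proc Reg Val State : Type}

/-- Process `p` performs operation `o`, taking configuration `C` to `C'`:
a read must read the actual register contents, a write updates the register. -/
def Algo.Takes [DecidableEq Reg] (A : Algo Reg Val State) (C : Config Proc Reg Val State)
    (p : Proc) (o : Op Reg Val) (C' : Config Proc Reg Val State) : Prop :=
  A.step (C.pstate p) o (C'.pstate p) ∧ (∀ q, q ≠ p → C'.pstate q = C.pstate q) ∧
    match o with
    | .read r v => C.regs r = v ∧ C'.regs = C.regs
    | .write r v => C'.regs = Function.update C.regs r v

/-- `A.Exec C sched C'`: the schedule `sched` is a legal execution interval taking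
configuration `C` to configuration `C'`. -/
inductive Algo.Exec [DecidableEq Reg] (A : Algo Reg Val State) :
    Config Proc Reg Val State → List (Proc × Op Reg Val) → Config Proc Reg Val State → Prop
  | nil (C : Config Proc Reg Val State) : Algo.Exec A C [] C
  | cons {C C₁ C₂ : Config Proc Reg Val State} {p : Proc} {o : Op Reg Val}
      {l : List (Proc × Op Reg Val)} :
      A.Takes C p o C₁ → Algo.Exec A C₁ l C₂ → Algo.Exec A C ((p, o) :: l) C₂

/-- The initial configuration for given inputs. -/
def Algo.initConfig (A : Algo Reg Val State) (inputs : Proc → Bool) :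
    Config Proc Reg Val State :=
  ⟨fun p => A.init (inputs p), A.initReg⟩

/-- `C` is reachable from the initial configuration for `inputs`. -/
def Algo.Reachable [DecidableEq Reg] (A : Algo Reg Val State) (inputs : Proc → Bool)
    (C : Config Proc Reg Val State) : Prop :=
  ∃ sched, A.Exec (A.initConfig inputs) sched C

/-- The set of registers written to during `sched`. -/
def writes (sched : List (Proc × Op Reg Val)) : Set Reg :=
  {r | ∃ p v, (p, Op.write r v) ∈ sched}

/-- The list of registers written to (with multiplicity) during `sched`. -/
def writesList (sched : List (Proc × Op Reg Val)) : List Reg :=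
  sched.filterMap fun s => match s.2 with | .write r _ => some r | .read _ _ => none

/-- All steps of `sched` are taken by process `p`. -/
def Solo (p : Proc) (sched : List (Proc × Op Reg Val)) : Prop := ∀ s ∈ sched, s.1 = p

/-- Some solo execution of process `p` from `C` ends with `p` having returned `b`. -/
def SoloReturns [DecidableEq Reg] (A : Algo Reg Val State) (C : Config Proc Reg Val State)
    (p : Proc) (b : Bool) : Prop :=
  ∃ sched C', Solo p sched ∧ A.Exec C sched C' ∧ A.output (C'.pstate p) = some b

/-- Agreement: in every reachable configuration, all returned outputs are equal. -/
def Agreement [DecidableEq Reg] (A : Algo Reg Val State) (inputs : Proc → Bool) : Prop :=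
  ∀ C, A.Reachable inputs C → ∀ p q bp bq,
    A.output (C.pstate p) = some bp → A.output (C.pstate q) = some bq → bp = bq

/-- Validity: every returned output is the input of some participating process. -/
def Validity [DecidableEq Reg] (A : Algo Reg Val State) (inputs : Proc → Bool) : Prop :=
  ∀ sched C, A.Exec (A.initConfig inputs) sched C → ∀ p b,
    A.output (C.pstate p) = some b → ∃ q o, (q, o) ∈ sched ∧ inputs q = b

/-- Nondeterministic solo termination: from every reachable configuration, every
process that has not returned has a finite solo execution in which it returns. -/
def SoloTermination [DecidableEq Reg] (A : Algo Reg Val State) (inputs : Proc → Bool) : Prop :=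
  ∀ C, A.Reachable inputs C → ∀ p, A.output (C.pstate p) = none →
    ∃ sched C', Solo p sched ∧ A.Exec C sched C' ∧ (A.output (C'.pstate p)).isSome

/-- Every execution writes to at most `m` distinct registers. -/
def SpaceBound [DecidableEq Reg] (A : Algo Reg Val State) (inputs : Proc → Bool)
    (m : ℕ) : Prop :=
  ∀ sched C, A.Exec (A.initConfig inputs) sched C → (writesList sched).toFinset.card ≤ m

/-! Induction on `r`. Suppose the processes of `U` can write to all `r` registers of `R` and reach a
bivalent configuration in which `p` can decide `0` alone and `q` can decide `1` alone. For each
`y ∈ R`, a fresh process with the same input as the last writer of `y` can shadow that process and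
stop right before its last write to `y`; nobody notices, and these `r` clones are now poised to
restore the contents of `R`. If the deciding run of `p` only wrote to `R`, then the clones could
erase its traces and `q` would decide `1` although `p` decided `0`. So `p` reaches a point where it
is about to write to some `x ∉ R`. From there, let the clones restore `R` and let `q` run until it
decides `1`. Inserting the write of `p` to `x` at the start of this execution yields a `0`-valent
configuration, inserting it at the end a `1`-valent one. At neighbouring insertion points the
valencies overlap, because the step in between either is overwritten by `p` or commutes with its
write; hence some insertion point yields a bivalent configuration. -/

theorem writes_append (l l' : List (Proc × Op Reg Val)) :
    writes (l ++ l') = writes l ∪ writes l' := by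
  ext y
  simp only [writes, List.mem_append, Set.mem_union, Set.mem_ofPred_eq, exists_or]

theorem writes_cons (p : Proc) (o : Op Reg Val) (l : List (Proc × Op Reg Val)) :
    writes ((p, o) :: l) = {y | ∃ v, o = .write y v} ∪ writes l := by
  ext y
  simp only [writes, List.mem_cons, Prod.mk.injEq, Set.mem_union, Set.mem_ofPred_eq, exists_or,
    exists_and_left, exists_eq_left, eq_comm (a := o)]

theorem exists_last_write {l : List (Proc × Op Reg Val)} {y : Reg} (hy : y ∈ writes l) :
    ∃ l₁ p v l₂, l = l₁ ++ (p, .write y v) :: l₂ ∧ y ∉ writes l₂ := by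
  induction l with
  | nil => simp [writes] at hy
  | cons s l ih =>
    by_cases hl : y ∈ writes l
    · obtain ⟨l₁, p, v, l₂, rfl, hl₂⟩ := ih hl
      exact ⟨s :: l₁, p, v, l₂, rfl, hl₂⟩
    · obtain ⟨p, o⟩ := s
      rw [writes_cons] at hy
      obtain ⟨v, rfl⟩ := hy.resolve_right hl
      exact ⟨[], p, v, l, rfl, hl⟩

theorem exists_first_write_notMem {l : List (Proc × Op Reg Val)} {R : Set Reg}
    (hl : ¬ writes l ⊆ R) :
    ∃ l₁ p x v l₂, l = l₁ ++ (p, .write x v) :: l₂ ∧ writes l₁ ⊆ R ∧ x ∉ R := by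
  induction l with
  | nil => simp [writes] at hl
  | cons s l ih =>
    obtain ⟨p, o⟩ := s
    by_cases ho : {y | ∃ v, o = .write y v} ⊆ R
    · obtain ⟨l₁, q, x, v, l₂, rfl, hl₁, hx⟩ := ih fun h =>
        hl (by rw [writes_cons]; exact Set.union_subset ho h)
      exact ⟨(p, o) :: l₁, q, x, v, l₂, rfl, by rw [writes_cons]; exact Set.union_subset ho hl₁, hx⟩
    · obtain ⟨x, ⟨v, rfl⟩, hx⟩ := Set.not_subset.1 ho
      exact ⟨[], p, x, v, l, rfl, by simp [writes], hx⟩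

/-- All steps of the schedule are taken by processes of `U`. -/
def StepsBy (U : Set Proc) (l : List (Proc × Op Reg Val)) : Prop := ∀ s ∈ l, s.1 ∈ U

theorem stepsBy_cons {U : Set Proc} {s : Proc × Op Reg Val} {l : List (Proc × Op Reg Val)} :
    StepsBy U (s :: l) ↔ s.1 ∈ U ∧ StepsBy U l :=
  List.forall_mem_cons

theorem stepsBy_append {U : Set Proc} {l l' : List (Proc × Op Reg Val)} :
    StepsBy U (l ++ l') ↔ StepsBy U l ∧ StepsBy U l' :=
  List.forall_mem_append

theorem Solo.stepsBy {U : Set Proc} {p : Proc} {l : List (Proc × Op Reg Val)} (h : Solo p l)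
    (hp : p ∈ U) : StepsBy U l := fun s hs => (h s hs).symm ▸ hp

theorem StepsBy.mono {U V : Set Proc} {l : List (Proc × Op Reg Val)} (h : StepsBy U l)
    (hUV : U ⊆ V) : StepsBy V l := fun s hs => hUV (h s hs)

namespace Op

/-- The register contents after the operation. -/
def apply [DecidableEq Reg] : Op Reg Val → (Reg → Val) → Reg → Val
  | .read _ _, f => f
  | .write y v, f => Function.update f y v

/-- The operation is possible at the given register contents: a read returns the actual value. -/
def Enabled : Op Reg Val → (Reg → Val) → Prop
  | .read y v, f => f y = v
  | .write _ _, _ => True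

theorem apply_apply [DecidableEq Reg] (o : Op Reg Val) (f : Reg → Val) :
    o.apply (o.apply f) = o.apply f := by
  cases o <;> simp [apply]

theorem Enabled.apply [DecidableEq Reg] {o : Op Reg Val} {f : Reg → Val} (h : o.Enabled f) :
    o.Enabled (o.apply f) := by
  cases o <;> simp_all [Enabled, Op.apply]

end Op

namespace Config

/-- The configuration after `p` performs `o` and moves to local state `s`. -/
def perform [DecidableEq Proc] [DecidableEq Reg] (C : Config Proc Reg Val State) (p : Proc)
    (o : Op Reg Val) (s : State) : Config Proc Reg Val State :=
  ⟨Function.update C.pstate p s, o.apply C.regs⟩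

@[simp]
theorem perform_pstate [DecidableEq Proc] [DecidableEq Reg] (C : Config Proc Reg Val State)
    (p : Proc) (o : Op Reg Val) (s : State) :
    (C.perform p o s).pstate = Function.update C.pstate p s :=
  rfl

@[simp]
theorem perform_regs [DecidableEq Proc] [DecidableEq Reg] (C : Config Proc Reg Val State)
    (p : Proc) (o : Op Reg Val) (s : State) : (C.perform p o s).regs = o.apply C.regs :=
  rfl

/-- `C` and `D` are indistinguishable to the processes of `U`: those have the same states in both,
and so do the registers. -/
def Indist (U : Set Proc) (C D : Config Proc Reg Val State) : Prop :=
  Set.EqOn C.pstate D.pstate U ∧ C.regs = D.regs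

theorem Indist.mono {U V : Set Proc} {C D : Config Proc Reg Val State} (h : Indist V C D)
    (hUV : U ⊆ V) : Indist U C D :=
  ⟨h.1.mono hUV, h.2⟩

theorem Indist.trans {U : Set Proc} {C D E : Config Proc Reg Val State} (h : Indist U C D)
    (h' : Indist U D E) : Indist U C E :=
  ⟨h.1.trans h'.1, h.2.trans h'.2⟩

end Config

open Config

section Executions

variable [DecidableEq Reg] {A : Algo Reg Val State} {C C' C'' D : Config Proc Reg Val State}
  {U : Set Proc} {p z : Proc} {o : Op Reg Val} {s : State} {y : Reg}
  {l l' : List (Proc × Op Reg Val)}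

namespace Algo

theorem takes_iff_exists_perform [DecidableEq Proc] :
    A.Takes C p o C' ↔
      ∃ s, A.step (C.pstate p) o s ∧ o.Enabled C.regs ∧ C' = C.perform p o s := by
  constructor
  · rintro ⟨hstep, hpstate, hregs⟩
    refine ⟨C'.pstate p, hstep, by cases o <;> simp_all [Op.Enabled], ?_⟩
    obtain ⟨pstate', regs'⟩ := C'
    refine congrArg₂ Config.mk (funext fun q => ?_) (by cases o <;> simp_all [Op.apply])
    by_cases hq : q = p
    · simp [hq]
    · simpa [hq] using hpstate q hq
  · rintro ⟨s, hstep, ho, rfl⟩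
    refine ⟨by simpa using hstep, fun q hq => by simp [hq], ?_⟩
    cases o <;> simp_all [Op.Enabled, Op.apply]

theorem takes_perform [DecidableEq Proc] (hs : A.step (C.pstate p) o s) (ho : o.Enabled C.regs) :
    A.Takes C p o (C.perform p o s) :=
  takes_iff_exists_perform.2 ⟨s, hs, ho, rfl⟩

theorem Takes.exists_indist (h : A.Takes C p o C') (hp : p ∈ U) (hCD : Indist U C D) :
    ∃ D', A.Takes D p o D' ∧ Indist U C' D' := by
  classical
  obtain ⟨s, hs, ho, rfl⟩ := takes_iff_exists_perform.1 h
  refine ⟨D.perform p o s, takes_perform (hCD.1 hp ▸ hs) (hCD.2 ▸ ho), fun q hq => ?_, ?_⟩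
  · simp [Function.update_apply, hCD.1 hq]
  · simp [hCD.2]

/-- Anonymity: a process in the same state as `p` can repeat the step of `p` immediately. -/
theorem Takes.exists_repeat (h : A.Takes C p o C') (hzp : z ≠ p) (hz : C.pstate z = C.pstate p) :
    ∃ C'', A.Takes C' z o C'' ∧ Indist {z}ᶜ C' C'' ∧ C''.pstate z = C'.pstate p := by
  classical
  obtain ⟨s, hs, ho, rfl⟩ := takes_iff_exists_perform.1 h
  refine ⟨(C.perform p o s).perform z o s, takes_perform ?_ ho.apply, ⟨fun q hq => ?_, ?_⟩, ?_⟩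
  · simpa [hzp, hz] using hs
  · simp only [Config.perform_pstate, Function.update_of_ne hq]
  · simp [Op.apply_apply]
  · simp

theorem exec_append_iff : A.Exec C (l ++ l') C'' ↔ ∃ C', A.Exec C l C' ∧ A.Exec C' l' C'' := by
  constructor
  · intro h
    induction l generalizing C with
    | nil => exact ⟨C, .nil C, h⟩
    | cons _ l ih =>
      cases h with
      | cons hstep hrest =>
        obtain ⟨C', h₁, h₂⟩ := ih hrest
        exact ⟨C', .cons hstep h₁, h₂⟩
  · rintro ⟨C', h, h'⟩
    induction h with
    | nil => exact h'
    | cons hstep _ ih => exact .cons hstep (ih h')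

theorem exec_cons_iff : A.Exec C ((p, o) :: l) C'' ↔ ∃ C', A.Takes C p o C' ∧ A.Exec C' l C'' :=
  ⟨fun | .cons h h' => ⟨_, h, h'⟩, fun ⟨_, h, h'⟩ => .cons h h'⟩

theorem Takes.exec (h : A.Takes C p o C') : A.Exec C [(p, o)] C' := .cons h (.nil _)

namespace Exec

theorem append (h : A.Exec C l C') (h' : A.Exec C' l' C'') : A.Exec C (l ++ l') C'' :=
  exec_append_iff.2 ⟨C', h, h'⟩

theorem pstate_eq (h : A.Exec C l C') (hl : StepsBy U l) (hz : z ∉ U) :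
    C'.pstate z = C.pstate z := by
  induction h with
  | nil => rfl
  | cons hstep _ ih =>
    rw [stepsBy_cons] at hl
    rw [ih hl.2, hstep.2.1 z (ne_of_mem_of_not_mem hl.1 hz).symm]

theorem regs_eq (h : A.Exec C l C') (hy : y ∉ writes l) : C'.regs y = C.regs y := by
  classical
  induction h with
  | nil => rfl
  | @cons _ _ _ _ o _ hstep _ ih =>
    rw [writes_cons, Set.mem_union, not_or] at hy
    obtain ⟨s, -, -, rfl⟩ := takes_iff_exists_perform.1 hstep
    rw [ih hy.2]
    cases o with
    | read => rfl
    | write x v =>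
      have hyx : y ≠ x := by rintro rfl; exact hy.1 ⟨v, rfl⟩
      simp [Op.apply, hyx]

theorem exists_indist (h : A.Exec C l C') (hl : StepsBy U l) (hCD : Indist U C D) :
    ∃ D', A.Exec D l D' ∧ Indist U C' D' := by
  induction h generalizing D with
  | nil => exact ⟨D, .nil D, hCD⟩
  | cons hstep _ ih =>
    rw [stepsBy_cons] at hl
    obtain ⟨D₁, hD₁, hCD₁⟩ := hstep.exists_indist hl.1 hCD
    obtain ⟨D', hD', hCD'⟩ := ih hl.2 hCD₁
    exact ⟨D', .cons hD₁ hD', hCD'⟩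

/-- `z` repeats each step of `p` right after `p`, unnoticed by the others. -/
theorem exists_shadow (h : A.Exec C l C') (hl : StepsBy U l) (hp : p ∈ U) (hz : z ∉ U)
    (hCD : Indist U C D) (hDz : D.pstate z = C.pstate p) :
    ∃ l' D', A.Exec D l' D' ∧ StepsBy (insert z U) l' ∧ writes l ⊆ writes l' ∧
      Indist U C' D' ∧ D'.pstate z = C'.pstate p := by
  induction h generalizing D with
  | nil => exact ⟨[], D, .nil D, by simp [StepsBy], subset_rfl, hCD, hDz⟩
  | @cons C C₁ _ q o l hstep _ ih =>
    rw [stepsBy_cons] at hl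
    obtain ⟨D₁, hD₁, hCD₁⟩ := hstep.exists_indist hl.1 hCD
    have hzq : z ≠ q := (ne_of_mem_of_not_mem hl.1 hz).symm
    by_cases hqp : q = p
    · subst hqp
      obtain ⟨D₂, hD₂, hD₁₂, hD₂z⟩ := hD₁.exists_repeat hzq (hDz.trans (hCD.1 hp))
      obtain ⟨l', D', hD', hl', hw, hCD', hD'z⟩ := ih hl.2
        (hCD₁.trans (hD₁₂.mono (Set.subset_compl_singleton_iff.2 hz)))
        (hD₂z.trans (hCD₁.1 hp).symm)
      refine ⟨(q, o) :: (z, o) :: l', D', .cons hD₁ (.cons hD₂ hD'), ?_, ?_, hCD', hD'z⟩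
      · simpa [stepsBy_cons, hp] using hl'
      · simp only [writes_cons]
        exact Set.union_subset_union_right _ (hw.trans Set.subset_union_right)
    · have hD₁z : D₁.pstate z = C₁.pstate p := by
        rw [hD₁.2.1 z hzq, hDz, hstep.2.1 p (Ne.symm hqp)]
      obtain ⟨l', D', hD', hl', hw, hCD', hD'z⟩ := ih hl.2 hCD₁ hD₁z
      refine ⟨(q, o) :: l', D', .cons hD₁ hD', stepsBy_cons.2 ⟨.inr hl.1, hl'⟩, ?_, hCD', hD'z⟩
      simp only [writes_cons]
      exact Set.union_subset_union_right _ hw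

end Exec

theorem Reachable.exec {inputs : Proc → Bool} (h : A.Reachable inputs C) (hl : A.Exec C l C') :
    A.Reachable inputs C' :=
  let ⟨_, hE⟩ := h
  ⟨_, hE.append hl⟩

end Algo

theorem SoloReturns.of_indist {b : Bool} (h : SoloReturns A C p b) (hCD : Indist {p} C D) :
    SoloReturns A D p b := by
  obtain ⟨l, C', hl, hC', hb⟩ := h
  obtain ⟨D', hD', hCD'⟩ := hC'.exists_indist (hl.stepsBy (Set.mem_singleton p)) hCD
  exact ⟨l, D', hl, hD', by rw [← hCD'.1 rfl, hb]⟩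

theorem SoloTermination.exists_soloReturns {inputs : Proc → Bool} (hT : SoloTermination A inputs)
    (hC : A.Reachable inputs C) (p : Proc) : ∃ b, SoloReturns A C p b := by
  cases h : A.output (C.pstate p) with
  | some b => exact ⟨b, [], C, by simp [Solo], .nil C, h⟩
  | none =>
    obtain ⟨l, C', hl, hC', hout⟩ := hT C hC p h
    obtain ⟨b, hb⟩ := Option.isSome_iff_exists.1 hout
    exact ⟨b, l, C', hl, hC', hb⟩

end Executions

section Clones

variable [DecidableEq Reg] {A : Algo Reg Val State} {C D : Config Proc Reg Val State}
  {U : Set Proc} {z : Proc} {inputs : Proc → Bool} {E l : List (Proc × Op Reg Val)}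
  {R : Finset Reg} {c : Reg → Proc}

namespace Algo

/-- A process in state `s` is poised to write `v` to `y`: this is a possible next step of it. -/
def Poised (A : Algo Reg Val State) (s : State) (y : Reg) (v : Val) : Prop :=
  ∃ s', A.step s (.write y v) s'

/-- The distinct processes `c y` outside `U`, for `y ∈ R`, are poised to write to `y` the value that
`y` holds in `C`. Their block write restores `R` after later writes by other processes. -/
structure RestoringCover (A : Algo Reg Val State) (C : Config Proc Reg Val State) (U : Set Proc)
    (R : Finset Reg) (c : Reg → Proc) : Prop where
  injOn : Set.InjOn c R
  notMem : ∀ y ∈ R, c y ∉ U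
  poised : ∀ y ∈ R, A.Poised (C.pstate (c y)) y (C.regs y)

theorem Exec.exists_clone (hE : A.Exec (A.initConfig inputs) E C) (hEU : StepsBy U E) {y : Reg}
    (hy : y ∈ writes E) (hz : z ∉ U) :
    ∃ inputs' E' C', A.Exec (A.initConfig inputs') E' C' ∧ StepsBy (insert z U) E' ∧
      writes E ⊆ writes E' ∧ Indist U C C' ∧ A.Poised (C'.pstate z) y (C.regs y) := by
  classical
  obtain ⟨E₁, p, v, E₂, rfl, hyE₂⟩ := exists_last_write hy
  obtain ⟨hE₁U, hE₂U⟩ := stepsBy_append.1 hEU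
  obtain ⟨hp, -⟩ := stepsBy_cons.1 hE₂U
  obtain ⟨C₁, hE₁, hE₂⟩ := exec_append_iff.1 hE
  obtain ⟨C₂, hwrite, hE₂'⟩ := exec_cons_iff.1 hE₂
  have hinit : Indist U (A.initConfig inputs)
      (A.initConfig (Function.update inputs z (inputs p))) :=
    ⟨fun q hq => by simp [initConfig, ne_of_mem_of_not_mem hq hz], rfl⟩
  obtain ⟨E₁', D₁, hE₁', hE₁'U, hw, hCD₁, hD₁z⟩ :=
    hE₁.exists_shadow hE₁U hp hz hinit (by simp [initConfig])
  obtain ⟨C', hE₂'', hCC'⟩ := hE₂.exists_indist hE₂U hCD₁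
  refine ⟨_, E₁' ++ (p, .write y v) :: E₂, C', hE₁'.append hE₂'',
    stepsBy_append.2 ⟨hE₁'U, hE₂U.mono (Set.subset_insert z U)⟩, ?_, hCC', C₂.pstate p, ?_⟩
  · rw [writes_append, writes_append]
    exact Set.union_subset_union_left _ hw
  · have hCy : C.regs y = v := by
      rw [hE₂'.regs_eq hyE₂, hwrite.2.2, Function.update_self]
    rw [hE₂''.pstate_eq hE₂U hz, hD₁z, hCy]
    exact hwrite.1

theorem Exec.exists_restoringCover (hE : A.Exec (A.initConfig inputs) E C) (hEU : StepsBy U E)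
    (hRE : ↑R ⊆ writes E) (hc : Set.InjOn c R) (hcU : ∀ y ∈ R, c y ∉ U) :
    ∃ inputs' E' C', A.Exec (A.initConfig inputs') E' C' ∧ StepsBy (U ∪ c '' R) E' ∧
      writes E ⊆ writes E' ∧ Indist U C C' ∧ A.RestoringCover C' U R c := by
  induction R using Finset.induction_on with
  | empty =>
    exact ⟨inputs, E, C, hE, by simpa using hEU, subset_rfl, ⟨fun _ _ => rfl, rfl⟩,
      ⟨by simp, by simp, by simp⟩⟩
  | insert y R hyR ih =>
    rw [Finset.coe_insert, Set.insert_subset_iff] at hRE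
    rw [Finset.coe_insert] at hc
    obtain ⟨inputs₁, E₁, C₁, hE₁, hE₁U, hw₁, hCC₁, hcover⟩ := ih hRE.2
      (hc.mono (Set.subset_insert _ _)) fun y' hy' => hcU y' (Finset.mem_insert_of_mem hy')
    have hcy : c y ∉ U ∪ c '' R := by
      rintro (hyU | hyc)
      · exact hcU y (Finset.mem_insert_self y R) hyU
      · exact hyR (Finset.mem_coe.1 ((hc.mem_image_iff (Set.subset_insert _ _)
          (Set.mem_insert _ _)).1 hyc))
    obtain ⟨inputs', E', C', hE', hE'U, hw', hCC', hpoised⟩ :=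
      hE₁.exists_clone hE₁U (hw₁ hRE.1) hcy
    refine ⟨inputs', E', C', hE', by simpa [Set.image_insert_eq] using hE'U, hw₁.trans hw',
      hCC₁.trans (hCC'.mono Set.subset_union_left), ⟨by simpa using hc, hcU, ?_⟩⟩
    rw [← hCC'.2, Finset.forall_mem_insert]
    refine ⟨hpoised, fun y' hy' => ?_⟩
    rw [← hCC'.1 (.inr (Set.mem_image_of_mem c hy'))]
    exact hcover.poised y' hy'

theorem exists_block_write {v : Reg → Val} (hc : Set.InjOn c R)
    (hpoised : ∀ y ∈ R, A.Poised (C.pstate (c y)) y (v y)) :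
    ∃ l C', A.Exec C l C' ∧ StepsBy (c '' R) l ∧ C'.regs = R.piecewise v C.regs := by
  classical
  induction R using Finset.induction_on with
  | empty => exact ⟨[], C, .nil C, by simp [StepsBy], by simp⟩
  | insert y R hyR ih =>
    rw [Finset.coe_insert] at hc
    obtain ⟨l, C', hl, hlR, hregs⟩ := ih (hc.mono (Set.subset_insert _ _))
      fun y' hy' => hpoised y' (Finset.mem_insert_of_mem hy')
    have hcy : c y ∉ c '' R := fun h => hyR (Finset.mem_coe.1
      ((hc.mem_image_iff (Set.subset_insert _ _) (Set.mem_insert _ _)).1 h))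
    obtain ⟨s', hs'⟩ := hpoised y (Finset.mem_insert_self y R)
    rw [← hl.pstate_eq hlR hcy] at hs'
    refine ⟨l ++ [(c y, .write y (v y))], _, hl.append (takes_perform hs' trivial).exec, ?_, ?_⟩
    · simp only [stepsBy_append, stepsBy_cons, Finset.coe_insert, Set.image_insert_eq]
      exact ⟨hlR.mono (Set.subset_insert _ _), Set.mem_insert _ _, by simp [StepsBy]⟩
    · rw [Finset.piecewise_insert, perform_regs, hregs]
      rfl

theorem RestoringCover.exists_returns_after (hcover : A.RestoringCover C U R c)
    (hl : A.Exec C l D) {p q : Proc} (hlp : Solo p l) (hlR : writes l ⊆ R) (hp : p ∈ U)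
    (hq : q ∈ U) (hqp : q ≠ p) {b : Bool} (hqb : SoloReturns A C q b) :
    ∃ l' D', A.Exec D l' D' ∧ StepsBy (insert q (c '' R)) l' ∧
      A.output (D'.pstate q) = some b := by
  classical
  have hDC : ∀ z, z ≠ p → D.pstate z = C.pstate z := fun z hz =>
    hl.pstate_eq (hlp.stepsBy (Set.mem_singleton p)) hz
  obtain ⟨β, D₁, hβ, hβR, hregs⟩ := exists_block_write (C := D) hcover.injOn fun y hy => by
    rw [hDC _ (ne_of_mem_of_not_mem hp (hcover.notMem y hy)).symm]
    exact hcover.poised y hy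
  have hrestored : D₁.regs = C.regs := by
    rw [hregs]
    ext y
    by_cases hy : y ∈ R
    · simp [hy]
    · simpa [hy] using hl.regs_eq fun h => hy (hlR h)
  have hqc : q ∉ c '' R := by
    rintro ⟨y, hy, rfl⟩
    exact hcover.notMem y hy hq
  have hCD₁ : Indist {q} C D₁ := by
    refine ⟨?_, hrestored.symm⟩
    rw [Set.eqOn_singleton, hβ.pstate_eq hβR hqc, hDC q hqp]
  obtain ⟨γ, D', hγq, hγ, hb⟩ := hqb.of_indist hCD₁
  refine ⟨β ++ γ, D', hβ.append hγ,
    stepsBy_append.2 ⟨hβR.mono (Set.subset_insert _ _), hγq.stepsBy (Set.mem_insert _ _)⟩, hb⟩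

end Algo

end Clones

section Valency

variable [DecidableEq Reg] {A : Algo Reg Val State} {C C' : Config Proc Reg Val State}
  {U V : Set Proc} {p q : Proc} {o : Op Reg Val} {s : State} {x : Reg} {v : Val}
  {inputs : Proc → Bool} {l : List (Proc × Op Reg Val)} {b : Bool}

namespace Algo

/-- `C` is `b`-valent for `U`: some process of `U` can return `b` running alone from `C`. -/
def Valent (A : Algo Reg Val State) (U : Set Proc) (C : Config Proc Reg Val State) (b : Bool) :
    Prop :=
  ∃ p ∈ U, SoloReturns A C p b

/-- `C` is bivalent for `U`: processes of `U` can return either value running alone from `C`. -/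
def Bivalent (A : Algo Reg Val State) (U : Set Proc) (C : Config Proc Reg Val State) : Prop :=
  ∀ b, A.Valent U C b

theorem Valent.mono (h : A.Valent U C b) (hUV : U ⊆ V) : A.Valent V C b :=
  let ⟨p, hp, hb⟩ := h
  ⟨p, hUV hp, hb⟩

theorem Bivalent.exists_ne (h : A.Bivalent U C) (hU : U.Nontrivial)
    (hT : SoloTermination A inputs) (hC : A.Reachable inputs C) :
    ∃ p ∈ U, ∃ q ∈ U, q ≠ p ∧ SoloReturns A C p false ∧ SoloReturns A C q true := by
  obtain ⟨p, hp, hp₀⟩ := h false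
  obtain ⟨q, hq, hq₁⟩ := h true
  by_cases hqp : q = p
  · subst hqp
    obtain ⟨z, hz, hzq⟩ := hU.exists_ne q
    obtain ⟨b, hb⟩ := hT.exists_soloReturns hC z
    cases b with
    | false => exact ⟨z, hz, q, hq, hzq.symm, hb, hq₁⟩
    | true => exact ⟨q, hq, z, hz, hzq, hp₀, hb⟩
  · exact ⟨p, hp, q, hq, hqp, hp₀, hq₁⟩

theorem Takes.indist_perform_write_of_target_eq [DecidableEq Proc] (h : A.Takes C q o C')
    (ho : o.target = x) :
    Indist {q}ᶜ (C.perform p (.write x v) s) (C'.perform p (.write x v) s) := by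
  obtain ⟨t, -, -, rfl⟩ := takes_iff_exists_perform.1 h
  refine ⟨fun z hz => ?_, ?_⟩
  · simp [Function.update_apply, show z ≠ q from hz]
  · cases o <;> simp_all [Op.apply, Op.target]

theorem Takes.perform_write_of_target_ne [DecidableEq Proc] (h : A.Takes C q o C')
    (ho : o.target ≠ x) (hqp : q ≠ p) :
    A.Takes (C.perform p (.write x v) s) q o (C'.perform p (.write x v) s) := by
  obtain ⟨t, ht, hen, rfl⟩ := takes_iff_exists_perform.1 h
  refine takes_iff_exists_perform.2 ⟨t, by simpa [hqp] using ht, ?_, ?_⟩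
  · cases o <;> simp_all [Op.Enabled, Op.apply, Op.target]
  · refine congrArg₂ Config.mk (Function.update_comm hqp _ _ _) ?_
    cases o with
    | read => rfl
    | write y u => exact Function.update_comm ho _ _ _

theorem Takes.exists_common_valency [DecidableEq Proc] (h : A.Takes C q o C') (hqp : q ≠ p)
    (hs : A.step (C.pstate p) (.write x v) s) (hT : SoloTermination A inputs)
    (hC : A.Reachable inputs C) :
    ∃ b, A.Valent {p, q} (C.perform p (.write x v) s) b ∧
      A.Valent {p, q} (C'.perform p (.write x v) s) b := by
  have hs' : A.step (C'.pstate p) (.write x v) s := by rwa [h.2.1 p hqp.symm]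
  by_cases ho : o.target = x
  · obtain ⟨b, hb⟩ := hT.exists_soloReturns (hC.exec (takes_perform hs trivial).exec) p
    have hindist := (h.indist_perform_write_of_target_eq (p := p) (v := v) (s := s)
      ho).mono (Set.singleton_subset_iff.2 hqp.symm)
    exact ⟨b, ⟨p, by simp, hb⟩, ⟨p, by simp, hb.of_indist hindist⟩⟩
  · obtain ⟨b, l, D, hl, hD, hb⟩ :=
      hT.exists_soloReturns ((hC.exec h.exec).exec (takes_perform hs' trivial).exec) q
    exact ⟨b, ⟨q, by simp, (q, o) :: l, D, List.forall_mem_cons.2 ⟨rfl, hl⟩,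
      .cons (h.perform_write_of_target_ne ho hqp) hD, hb⟩, ⟨q, by simp, l, D, hl, hD, hb⟩⟩

theorem Exec.exists_bivalent_perform_write [DecidableEq Proc] (h : A.Exec C l C')
    (hl : StepsBy (V \ {p}) l) (hp : p ∈ V) (hs : A.step (C.pstate p) (.write x v) s)
    (hT : SoloTermination A inputs) (hC : A.Reachable inputs C)
    (hfalse : A.Valent V (C.perform p (.write x v) s) false)
    (htrue : A.Valent V (C'.perform p (.write x v) s) true) :
    ∃ l' D, A.Exec C (l' ++ [(p, .write x v)]) D ∧ StepsBy V l' ∧ A.Bivalent V D := by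
  have hnow {C : Config Proc Reg Val State} (hs : A.step (C.pstate p) (.write x v) s)
      (hfalse : A.Valent V (C.perform p (.write x v) s) false)
      (htrue : A.Valent V (C.perform p (.write x v) s) true) :
      ∃ l' D, A.Exec C (l' ++ [(p, .write x v)]) D ∧ StepsBy V l' ∧ A.Bivalent V D :=
    ⟨[], _, (takes_perform hs trivial).exec, by simp [StepsBy], Bool.forall_bool.2 ⟨hfalse, htrue⟩⟩
  induction h with
  | nil => exact hnow hs hfalse htrue
  | @cons C C₁ _ q o l hstep _ ih =>
    obtain ⟨⟨hq, hqp⟩, hl⟩ := stepsBy_cons.1 hl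
    have hpq : ({p, q} : Set Proc) ⊆ V := Set.pair_subset hp hq
    obtain ⟨b, hb, hb₁⟩ := hstep.exists_common_valency hqp hs hT hC
    cases b with
    | true => exact hnow hs hfalse (hb.mono hpq)
    | false =>
      have hs₁ : A.step (C₁.pstate p) (.write x v) s := by rwa [hstep.2.1 p (Ne.symm hqp)]
      obtain ⟨l', D, hD, hl', hbiv⟩ := ih hl hs₁ (hC.exec hstep.exec) (hb₁.mono hpq) htrue
      exact ⟨(q, o) :: l', D, .cons hstep hD, stepsBy_cons.2 ⟨hq, hl'⟩, hbiv⟩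

end Algo

end Valency

section Induction

variable [DecidableEq Reg] {A : Algo Reg Val State} {C D : Config Proc Reg Val State}
  {U V : Set Proc} {p q : Proc} {inputs : Proc → Bool} {l : List (Proc × Op Reg Val)}
  {R : Finset Reg} {c : Reg → Proc}

namespace Algo

theorem RestoringCover.not_writes_subset (hcover : A.RestoringCover C U R c)
    (hA : Agreement A inputs) (hC : A.Reachable inputs C) (hp : p ∈ U) (hq : q ∈ U) (hqp : q ≠ p)
    (hq₁ : SoloReturns A C q true) (hlp : Solo p l) (hl : A.Exec C l D)
    (hp₀ : A.output (D.pstate p) = some false) : ¬ writes l ⊆ R := by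
  intro hlR
  obtain ⟨l', D', hl', hl'q, hq₁'⟩ := hcover.exists_returns_after hl hlp hlR hp hq hqp hq₁
  have hpl' : p ∉ insert q (c '' R) := by
    rintro (rfl | ⟨y, hy, rfl⟩)
    · exact hqp rfl
    · exact hcover.notMem y hy hp
  rw [← hl'.pstate_eq hl'q hpl'] at hp₀
  exact Bool.false_ne_true (hA D' ((hC.exec hl).exec hl') p q false true hp₀ hq₁')

theorem RestoringCover.exists_bivalent (hcover : A.RestoringCover C U R c)
    (hA : Agreement A inputs) (hT : SoloTermination A inputs) (hC : A.Reachable inputs C)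
    (hUV : U ⊆ V) (hcV : Set.MapsTo c R V) (hp : p ∈ U) (hq : q ∈ U) (hqp : q ≠ p)
    (hp₀ : SoloReturns A C p false) (hq₁ : SoloReturns A C q true) :
    ∃ x ∉ R, ∃ l D, A.Exec C l D ∧ StepsBy V l ∧ x ∈ writes l ∧ A.Bivalent V D := by
  classical
  obtain ⟨α, Cα, hαp, hα, hα₀⟩ := hp₀
  obtain ⟨α₁, p', x, v, α₂, rfl, hα₁R, hxR⟩ := exists_first_write_notMem
    (hcover.not_writes_subset hA hC hp hq hqp hq₁ hαp hα hα₀)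
  obtain ⟨hα₁p, hxα₂⟩ := List.forall_mem_append.1 hαp
  obtain ⟨rfl, hα₂p⟩ := List.forall_mem_cons.1 hxα₂
  obtain ⟨D, hα₁, hrest⟩ := exec_append_iff.1 hα
  obtain ⟨Dx, hwrite, hα₂⟩ := exec_cons_iff.1 hrest
  obtain ⟨s, hs, -, rfl⟩ := takes_iff_exists_perform.1 hwrite
  obtain ⟨β, D', hβ, hβq, hq₁'⟩ := hcover.exists_returns_after hα₁ hα₁p hα₁R hp hq hqp hq₁
  have hβV : StepsBy (V \ {p'}) β := hβq.mono <| Set.insert_subset ⟨hUV hq, hqp⟩ <| by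
    rintro _ ⟨y, hy, rfl⟩
    exact ⟨hcV hy, (ne_of_mem_of_not_mem hp (hcover.notMem y hy)).symm⟩
  obtain ⟨l, D₁, hD₁, hlV, hbiv⟩ := hβ.exists_bivalent_perform_write hβV (hUV hp) hs hT
    (hC.exec hα₁) ⟨p', hUV hp, α₂, Cα, hα₂p, hα₂, hα₀⟩
    ⟨q, hUV hq, [], _, by simp [Solo], .nil _, by simpa [hqp] using hq₁'⟩
  refine ⟨x, hxR, _, D₁, hα₁.append hD₁, ?_, ?_, hbiv⟩
  · exact stepsBy_append.2 ⟨Solo.stepsBy hα₁p (hUV hp),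
      stepsBy_append.2 ⟨hlV, List.forall_mem_singleton.2 (hUV hp)⟩⟩
  · simp [writes_append, writes_cons]

/-- The invariant of the induction: the processes of `U` can write to all registers of `R` and
reach a configuration that is bivalent for `U`. -/
def BivalentAfterWriting (A : Algo Reg Val State) (U : Set Proc) (R : Finset Reg) : Prop :=
  ∃ inputs E C, A.Exec (A.initConfig inputs) E C ∧ StepsBy U E ∧ ↑R ⊆ writes E ∧ A.Bivalent U C

theorem BivalentAfterWriting.exists_insert (h : A.BivalentAfterWriting U R)
    (hA : ∀ inputs : Proc → Bool, Agreement A inputs)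
    (hT : ∀ inputs : Proc → Bool, SoloTermination A inputs)
    (hU : U.Nontrivial) (hUV : U ⊆ V) (hcard : R.card ≤ (V \ U).encard) :
    ∃ x ∉ R, A.BivalentAfterWriting V (insert x R) := by
  obtain ⟨inputs₀, E₀, C₀, hE₀, hE₀U, hRE₀, hbiv₀⟩ := h
  obtain ⟨p, hp, q, hq, hqp, hp₀, hq₁⟩ := hbiv₀.exists_ne hU (hT inputs₀) ⟨E₀, hE₀⟩
  have : Nonempty Proc := ⟨p⟩
  obtain ⟨c, hcVU, hc⟩ :=
    R.finite_toSet.exists_injOn_of_encard_le (t := V \ U) (by simpa using hcard)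
  have hcV : Set.MapsTo c R V := fun y hy => (hcVU hy).1
  obtain ⟨inputs, E, C, hE, hEV, hw, hCC, hcover⟩ :=
    hE₀.exists_restoringCover hE₀U hRE₀ hc fun y hy => (hcVU hy).2
  obtain ⟨x, hxR, l, D, hl, hlV, hxl, hbiv⟩ := hcover.exists_bivalent (hA inputs) (hT inputs)
    ⟨E, hE⟩ hUV hcV hp hq hqp
    (hp₀.of_indist (hCC.mono (Set.singleton_subset_iff.2 hp)))
    (hq₁.of_indist (hCC.mono (Set.singleton_subset_iff.2 hq)))
  refine ⟨x, hxR, inputs, E ++ l, D, hE.append hl, stepsBy_append.2 ⟨hEV.mono ?_, hlV⟩, ?_, hbiv⟩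
  · exact Set.union_subset hUV hcV.image_subset
  · rw [writes_append, Finset.coe_insert]
    exact Set.insert_subset (.inr hxl) ((hRE₀.trans hw).trans Set.subset_union_left)

theorem soloReturns_initConfig (hV : Validity A inputs) (hT : SoloTermination A inputs)
    (p : Proc) : SoloReturns A (A.initConfig inputs) p (inputs p) := by
  obtain ⟨b, l, C, hl, hC, hb⟩ := hT.exists_soloReturns ⟨[], .nil _⟩ p
  obtain ⟨q, o, hqo, rfl⟩ := hV l C hC p b hb
  obtain rfl : q = p := hl _ hqo
  exact ⟨l, C, hl, hC, hb⟩

theorem bivalentAfterWriting_empty (hV : ∀ inputs : Proc → Bool, Validity A inputs)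
    (hT : ∀ inputs : Proc → Bool, SoloTermination A inputs) (hU : U.Nontrivial) :
    A.BivalentAfterWriting U ∅ := by
  classical
  obtain ⟨p, hp, q, hq, hpq⟩ := hU
  let inputs : Proc → Bool := fun z => decide (z = q)
  have hreturns := soloReturns_initConfig (hV inputs) (hT inputs)
  refine ⟨inputs, [], _, .nil _, by simp [StepsBy], by simp,
    Bool.forall_bool.2 ⟨⟨p, hp, ?_⟩, q, hq, ?_⟩⟩
  · simpa [inputs, hpq] using hreturns p
  · simpa [inputs] using hreturns q

end Algo

end Induction

theorem square_root_induction_general {Proc Reg Val State : Type} [DecidableEq Reg]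
    (A : Algo Reg Val State)
    (hAgree : ∀ inputs : Proc → Bool, Agreement A inputs)
    (hValid : ∀ inputs : Proc → Bool, Validity A inputs)
    (hTerm : ∀ inputs : Proc → Bool, SoloTermination A inputs)
    (r : ℕ) (P : Finset Proc) (hP : P.card = (r - 1) * r / 2 + 2) :
    ∃ R : Finset Reg, R.card = r ∧ A.BivalentAfterWriting (P : Set Proc) R := by
  induction r generalizing P with
  | zero =>
    exact ⟨∅, rfl, Algo.bivalentAfterWriting_empty hValid hTerm
      (Finset.one_lt_card_iff_nontrivial.1 (by omega))⟩
  | succ r ih =>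
    classical
    have hPr : P.card = (r - 1) * r / 2 + 2 + r := by
      rw [hP, mul_comm, Nat.triangle_succ, mul_comm r, Nat.add_right_comm]
    obtain ⟨U, hUP, hU⟩ := Finset.exists_subset_card_eq (hPr ▸ Nat.le_add_right _ r)
    obtain ⟨R, hR, hbiv⟩ := ih U hU
    have hclones : R.card ≤ ((P : Set Proc) \ U).encard := by
      rw [← Finset.coe_sdiff, Set.encard_coe_eq_coe_finsetCard, Finset.card_sdiff_of_subset hUP]
      exact_mod_cast (by omega : R.card ≤ P.card - U.card)
    obtain ⟨x, hxR, hbiv'⟩ := hbiv.exists_insert hAgree hTerm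
      (Finset.one_lt_card_iff_nontrivial.1 (by omega)) (Finset.coe_subset.2 hUP) hclones
    exact ⟨insert x R, by rw [Finset.card_insert_of_notMem hxR, hR], hbiv'⟩

/-- For every `r ≥ 0` there is a system of `(r-1)r/2 + 2` anonymous
processes such that, for any binary consensus algorithm using atomic read-write
registers and satisfying nondeterministic solo termination, a configuration `C_r`
is reachable by an execution `E_r` such that (1) some set `R` of `r` registers has
each of its registers written to during `E_r`, and (2) `C_r` is bivalent: some solo
execution from `C_r` returns `0` and some solo execution from `C_r` returns `1`. -/
theorem square_root_induction (r : ℕ) {Reg Val State : Type} [DecidableEq Reg]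
    (A : Algo Reg Val State)
    (hAgree : ∀ inputs : Fin ((r - 1) * r / 2 + 2) → Bool, Agreement A inputs)
    (hValid : ∀ inputs : Fin ((r - 1) * r / 2 + 2) → Bool, Validity A inputs)
    (hTerm : ∀ inputs : Fin ((r - 1) * r / 2 + 2) → Bool, SoloTermination A inputs) :
    ∃ (inputs : Fin ((r - 1) * r / 2 + 2) → Bool)
      (E : List (Fin ((r - 1) * r / 2 + 2) × Op Reg Val))
      (C : Config (Fin ((r - 1) * r / 2 + 2)) Reg Val State),
      A.Exec (A.initConfig inputs) E C ∧
      (∃ R : Finset Reg, R.card = r ∧ ∀ reg ∈ R, reg ∈ writes E) ∧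
      (∃ p, SoloReturns A C p false) ∧ (∃ q, SoloReturns A C q true) := by
  obtain ⟨R, hR, inputs, E, C, hE, -, hRE, hbiv⟩ :=
    square_root_induction_general A hAgree hValid hTerm r Finset.univ (Finset.card_fin _)
  obtain ⟨p, -, hp⟩ := hbiv false
  obtain ⟨q, -, hq⟩ := hbiv true
  exact ⟨inputs, E, C, hE, ⟨R, hR, hRE⟩, ⟨p, hp⟩, ⟨q, hq⟩⟩
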